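/- arXiv:1806.00673 — 3 statements merged into one kernel-verified Lean document; each statement's English description precedes it below -/
import Mathlib

section
/- Let N be a positive integer, let A ∈ ℂ^{N×N} be Hermitian positive definite, let b ∈ ℂ^N, set V = A + b bᴴ, and for u ∈ ℂ^N define e(u) = Re(uᴴ V u) − 2 Re(uᴴ b) + 1. Then the supremum over all u ∈ ℂ^N and all real ρ > 0 of the quantity log ρ − ρ·e(u) + 1 equals log(1 + Re(bᴴ A⁻¹ b)); the supremum is attained exactly at u = V⁻¹ b and ρ = (1 − Re(bᴴ V⁻¹ b))⁻¹, and at no other point. -/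
open Matrix
open scoped ComplexOrder

/-!
For fixed `u`, the concave function `ρ ↦ log ρ - ρ e(u) + 1` is maximal exactly at `ρ = e(u)⁻¹`,
with value `-log e(u)`, so it remains to minimize `e`. Completing the square around the solution `w`
of `V w = b` gives `e(u) = e(w) + (u - w)ᴴ V (u - w)`, hence `w` is the unique minimizer. Finally
`V w = b` reads `A w = (1 - bᴴ w) b`, so `w = (1 - bᴴ w) A⁻¹ b`, and pairing with `b` yields
`e(w) = 1 - bᴴ w = (1 + bᴴ A⁻¹ b)⁻¹`.
-/

section LogLinear

variable {ρ x ε : ℝ}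

theorem log_sub_mul_add_one_le_neg_log (hρ : 0 < ρ) (hx : 0 < x) :
    Real.log ρ - ρ * x + 1 ≤ -Real.log x := by
  have hlog := Real.log_le_sub_one_of_pos (mul_pos hρ hx)
  rw [Real.log_mul hρ.ne' hx.ne'] at hlog
  linarith

theorem log_sub_mul_add_one_eq_neg_log_iff (hρ : 0 < ρ) (hx : 0 < x) :
    Real.log ρ - ρ * x + 1 = -Real.log x ↔ ρ = x⁻¹ := by
  refine ⟨fun h ↦ eq_inv_of_mul_eq_one_left ?_, ?_⟩
  · by_contra hne
    have hlog := Real.log_lt_sub_one_of_pos (mul_pos hρ hx) hne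
    rw [Real.log_mul hρ.ne' hx.ne'] at hlog
    linarith
  · rintro rfl
    simp [Real.log_inv, hx.ne']

theorem log_sub_mul_add_one_eq_neg_log_iff_of_le (hρ : 0 < ρ) (hε : 0 < ε) (hεx : ε ≤ x) :
    Real.log ρ - ρ * x + 1 = -Real.log ε ↔ x = ε ∧ ρ = ε⁻¹ := by
  constructor
  · intro h
    have hx : x = ε := by
      refine le_antisymm ((Real.log_le_log_iff (hε.trans_le hεx) hε).1 ?_) hεx
      linarith [log_sub_mul_add_one_le_neg_log hρ (hε.trans_le hεx)]
    subst hx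
    exact ⟨rfl, (log_sub_mul_add_one_eq_neg_log_iff hρ hε).1 h⟩
  · rintro ⟨rfl, h⟩
    exact (log_sub_mul_add_one_eq_neg_log_iff hρ hε).2 h

end LogLinear

theorem one_add_dotProduct_mul_one_sub_dotProduct_of_mulVec_eq {n R : Type*} [Fintype n]
    [DecidableEq n] [CommRing R] {A : Matrix n n R} {b c w : n → R} (hA : IsUnit A)
    (hw : (A + vecMulVec b c) *ᵥ w = b) :
    (1 + c ⬝ᵥ A⁻¹ *ᵥ b) * (1 - c ⬝ᵥ w) = 1 := by
  have hAw : A *ᵥ w = (1 - c ⬝ᵥ w) • b := by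
    rw [add_mulVec, vecMulVec_mulVec, op_smul_eq_smul] at hw
    rw [sub_smul, one_smul, eq_sub_of_add_eq hw]
  have hparallel : w = (1 - c ⬝ᵥ w) • A⁻¹ *ᵥ b := by
    rw [← mulVec_smul, ← hAw, mulVec_mulVec, nonsing_inv_mul A ((isUnit_iff_isUnit_det A).1 hA),
      one_mulVec]
  have hdot := congrArg (c ⬝ᵥ ·) hparallel
  simp only [dotProduct_smul, smul_eq_mul] at hdot
  linear_combination -hdot

section MeanSquareError

variable {n 𝕜 : Type*} [Fintype n] [RCLike 𝕜] {V : Matrix n n 𝕜} {b u w : n → 𝕜}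

/-- The mean-square error `uᴴ V u - 2 Re(uᴴ b) + 1` of the receive beamformer `u` for a unit-power
symbol with effective signal vector `b`, where `V` is the covariance of the received signal.
The real part in the quadratic term makes it real-valued for every matrix `V`. -/
def meanSquareError (V : Matrix n n 𝕜) (b u : n → 𝕜) : ℝ :=
  RCLike.re (star u ⬝ᵥ V *ᵥ u) - 2 * RCLike.re (star u ⬝ᵥ b) + 1

theorem re_star_dotProduct_comm (x y : n → 𝕜) :
    RCLike.re (star x ⬝ᵥ y) = RCLike.re (star y ⬝ᵥ x) := by
  rw [star_dotProduct, RCLike.star_def, RCLike.conj_re]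

theorem meanSquareError_of_mulVec_eq (hw : V *ᵥ w = b) :
    meanSquareError V b w = 1 - RCLike.re (star b ⬝ᵥ w) := by
  rw [meanSquareError, hw, re_star_dotProduct_comm w b]
  ring

theorem meanSquareError_eq_add_of_mulVec_eq (hV : V.IsHermitian) (hw : V *ᵥ w = b) (u : n → 𝕜) :
    meanSquareError V b u =
      meanSquareError V b w + RCLike.re (star (u - w) ⬝ᵥ V *ᵥ (u - w)) := by
  have hcross : star w ⬝ᵥ V *ᵥ u = star b ⬝ᵥ u := by
    rw [dotProduct_mulVec, ← hV.eq, ← star_mulVec, hw]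
  rw [meanSquareError_of_mulVec_eq hw, meanSquareError]
  simp only [mulVec_sub, star_sub, sub_dotProduct, dotProduct_sub, hcross, hw, map_sub,
    re_star_dotProduct_comm u b, re_star_dotProduct_comm w b]
  ring

theorem meanSquareError_le_of_mulVec_eq (hV : V.PosSemidef) (hw : V *ᵥ w = b) (u : n → 𝕜) :
    meanSquareError V b w ≤ meanSquareError V b u := by
  rw [meanSquareError_eq_add_of_mulVec_eq hV.isHermitian hw u]
  exact le_add_of_nonneg_right (hV.re_dotProduct_nonneg (u - w))

theorem meanSquareError_eq_iff_of_mulVec_eq (hV : V.PosDef) (hw : V *ᵥ w = b) :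
    meanSquareError V b u = meanSquareError V b w ↔ u = w := by
  refine ⟨fun h ↦ ?_, fun h ↦ h ▸ rfl⟩
  rw [meanSquareError_eq_add_of_mulVec_eq hV.isHermitian hw u, add_eq_left] at h
  by_contra hne
  exact (hV.re_dotProduct_pos (sub_ne_zero.2 hne)).ne' h

variable [DecidableEq n] {A : Matrix n n 𝕜}

theorem meanSquareError_add_vecMulVec_of_mulVec_eq (hA : A.IsHermitian) (hA_unit : IsUnit A)
    (hw : (A + vecMulVec b (star b)) *ᵥ w = b) :
    meanSquareError (A + vecMulVec b (star b)) b w =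
      (1 + RCLike.re (star b ⬝ᵥ A⁻¹ *ᵥ b))⁻¹ := by
  have hmul := congrArg RCLike.re
    (one_add_dotProduct_mul_one_sub_dotProduct_of_mulVec_eq hA_unit hw)
  have him := hA.inv.im_star_dotProduct_mulVec_self b
  rw [meanSquareError_of_mulVec_eq hw]
  refine eq_inv_of_mul_eq_one_right ?_
  simpa [RCLike.mul_re, him] using hmul

end MeanSquareError

theorem wmmse_variational_characterization_general {n 𝕜 : Type*} [Fintype n] [DecidableEq n]
    [RCLike 𝕜] {A : Matrix n n 𝕜} (hA : A.PosDef) (b : n → 𝕜) :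
    let V : Matrix n n 𝕜 := A + vecMulVec b (star b)
    let F : (n → 𝕜) → ℝ → ℝ := fun u ρ => Real.log ρ - ρ * meanSquareError V b u + 1
    let M : ℝ := Real.log (1 + RCLike.re (star b ⬝ᵥ A⁻¹ *ᵥ b))
    let ustar : n → 𝕜 := V⁻¹ *ᵥ b
    let ρstar : ℝ := (1 - RCLike.re (star b ⬝ᵥ V⁻¹ *ᵥ b))⁻¹
    (∀ (u : n → 𝕜) (ρ : ℝ), 0 < ρ → F u ρ ≤ M) ∧
      (0 < ρstar ∧ F ustar ρstar = M) ∧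
      (∀ (u : n → 𝕜) (ρ : ℝ), 0 < ρ → (F u ρ = M ↔ u = ustar ∧ ρ = ρstar)) := by
  intro V F M ustar ρstar
  have hV : V.PosDef := hA.add_posSemidef (posSemidef_vecMulVec_self_star b)
  have hw : V *ᵥ ustar = b := by
    rw [mulVec_mulVec, mul_nonsing_inv V ((isUnit_iff_isUnit_det V).1 hV.isUnit), one_mulVec]
  have hmin := meanSquareError_le_of_mulVec_eq hV.posSemidef hw
  have hε : meanSquareError V b ustar = (1 + RCLike.re (star b ⬝ᵥ A⁻¹ *ᵥ b))⁻¹ :=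
    meanSquareError_add_vecMulVec_of_mulVec_eq hA.isHermitian hA.isUnit hw
  have hpos : 0 < meanSquareError V b ustar := by
    have := hA.inv.posSemidef.re_dotProduct_nonneg b
    rw [hε]
    positivity
  have hM : M = -Real.log (meanSquareError V b ustar) := by rw [hε, Real.log_inv, neg_neg]
  have hρ : ρstar = (meanSquareError V b ustar)⁻¹ := by rw [meanSquareError_of_mulVec_eq hw]
  have heq (u : n → 𝕜) (ρ : ℝ) (h : 0 < ρ) : F u ρ = M ↔ u = ustar ∧ ρ = ρstar := by
    rw [hM, hρ, log_sub_mul_add_one_eq_neg_log_iff_of_le h hpos (hmin u),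
      meanSquareError_eq_iff_of_mulVec_eq hV hw]
  have hρpos : 0 < ρstar := hρ ▸ inv_pos.2 hpos
  refine ⟨fun u ρ h ↦ ?_, ⟨hρpos, (heq _ _ hρpos).2 ⟨rfl, rfl⟩⟩, heq⟩
  calc F u ρ ≤ -Real.log (meanSquareError V b u) :=
        log_sub_mul_add_one_le_neg_log h (hpos.trans_le (hmin u))
    _ ≤ M := hM ▸ neg_le_neg (Real.log_le_log hpos (hmin u))

/-- Per-user variational (WMMSE) characterization of the rate: for Hermitian positive
definite `A`, `b : ℂ^N`, `V = A + b bᴴ` and `e u = Re(uᴴ V u) - 2 Re(uᴴ b) + 1`,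
the supremum over `u ∈ ℂ^N` and real `ρ > 0` of `log ρ - ρ e(u) + 1` equals
`log (1 + Re(bᴴ A⁻¹ b))`, and it is attained exactly at `u = V⁻¹ b`,
`ρ = (1 - Re(bᴴ V⁻¹ b))⁻¹`. -/
theorem wmmse_variational_characterization {N : ℕ} (hN : 0 < N)
    (A : Matrix (Fin N) (Fin N) ℂ) (hA : A.PosDef) (b : Fin N → ℂ) :
    let V : Matrix (Fin N) (Fin N) ℂ := A + Matrix.vecMulVec b (star b)
    let e : (Fin N → ℂ) → ℝ := fun u =>
      (star u ⬝ᵥ V *ᵥ u).re - 2 * (star u ⬝ᵥ b).re + 1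
    let F : (Fin N → ℂ) → ℝ → ℝ := fun u ρ => Real.log ρ - ρ * e u + 1
    let M : ℝ := Real.log (1 + (star b ⬝ᵥ A⁻¹ *ᵥ b).re)
    let ustar : Fin N → ℂ := V⁻¹ *ᵥ b
    let ρstar : ℝ := (1 - (star b ⬝ᵥ V⁻¹ *ᵥ b).re)⁻¹
    (∀ (u : Fin N → ℂ) (ρ : ℝ), 0 < ρ → F u ρ ≤ M) ∧
      (0 < ρstar ∧ F ustar ρstar = M) ∧
      (∀ (u : Fin N → ℂ) (ρ : ℝ), 0 < ρ → (F u ρ = M ↔ u = ustar ∧ ρ = ρstar)) :=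
  wmmse_variational_characterization_general hA b
end

section
/- Consider K users and T transmit antennas, with channel matrices H_k ∈ ℂ^{N×T}, weights α_k ≥ 0, noise variance σ² > 0, SNR gap Γ_m > 0, quantizer gap Γ_q > 0, per-antenna power budgets P_t ≥ 0, and per-antenna backhaul capacities C_t satisfying 2^{C_t} ≥ 1 + Γ_q. For beamformers w = (w_1,…,w_K) with each w_k ∈ ℂ^T and a vector q ∈ ℝ^T of nonnegative quantization noise levels, let R_k(w,q) = log(1 + SINR_k(w,q)/Γ_m) where SINR_k(w,q) = Re(w_kᴴ H_kᴴ (Σ_{j≠k} H_k w_j w_jᴴ H_kᴴ + σ² I + H_k diag(q) H_kᴴ)⁻¹ H_k w_k). Let q*_t = Γ_q P_t/(2^{C_t} − 1). Then the supremum of Σ_k α_k R_k(w,q) over all (w,q) satisfying, for each antenna t, Σ_k |w_k(t)|² + q_t ≤ P_t and q_t ≥ q*_t, equals the supremum of Σ_k α_k R_k(w,q*) over all w satisfying, for each t, Σ_k |w_k(t)|² ≤ P_t (1 − Γ_q/(2^{C_t} − 1)). -/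
open Matrix
open scoped ComplexOrder

/-!
The covariance matrix of interference plus noise increases with the quantization noise in the
Loewner order, and matrix inversion is antitone there, so every SINR, hence the weighted sum rate,
is antitone in the noise levels `q`. Lowering `q` to the floor `q*` therefore never decreases the
objective, and it also relaxes the power constraints, which at `q = q*` read
`∑ k, ‖w k t‖ ^ 2 ≤ P t - q* t = P t * (1 - Γq / (2 ^ C t - 1))`.
-/

section Loewner

variable {m n : Type*} [Fintype m]

open scoped MatrixOrder

open scoped Matrix.Norms.L2Operator in
theorem posDef_inv_le_inv [Fintype n] [DecidableEq n] {A B : Matrix n n ℂ} (hA : A.PosDef)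
    (hAB : A ≤ B) : B⁻¹ ≤ A⁻¹ := by
  simpa only [nonsing_inv_eq_ringInverse] using
    CStarAlgebra.ringInverse_le_ringInverse hAB hA.isStrictlyPositive

theorem re_dotProduct_conjTranspose_mul_mul_mulVec_mono [Fintype n] (H : Matrix n m ℂ) (x : m → ℂ) :
    Monotone fun A : Matrix n n ℂ => (star x ⬝ᵥ (Hᴴ * A * H) *ᵥ x).re := by
  intro A B hAB
  have hform : 0 ≤ star x ⬝ᵥ (Hᴴ * (B - A) * H) *ᵥ x :=
    ((le_iff.1 hAB).conjTranspose_mul_mul_same H).dotProduct_mulVec_nonneg x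
  rw [Matrix.mul_sub, Matrix.sub_mul, sub_mulVec, dotProduct_sub, sub_nonneg] at hform
  exact (Complex.le_def.1 hform).1

theorem mul_diagonal_mul_conjTranspose_mono [Finite n] [DecidableEq m] (H : Matrix n m ℂ) :
    Monotone fun q : m → ℝ => H * diagonal (fun t => (q t : ℂ)) * Hᴴ := by
  intro p q hpq
  have hdiag : (diagonal (fun t => (q t : ℂ)) - diagonal (fun t => (p t : ℂ))).PosSemidef := by
    rw [diagonal_sub]
    exact PosSemidef.diagonal fun t => sub_nonneg.2 (Complex.real_le_real.2 (hpq t))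
  simpa only [le_iff, Matrix.mul_sub, Matrix.sub_mul] using hdiag.mul_mul_conjTranspose_same H

end Loewner

section SumRate

variable {κ τ ν : Type*} [Fintype κ] [DecidableEq κ] [Fintype τ] [DecidableEq τ]
  [DecidableEq ν]

/-- Covariance of interference plus receiver noise plus forwarded quantization noise at user `k`,
for beamformers `w` and per-antenna quantization noise levels `q`. -/
def noiseCovariance (H : κ → Matrix ν τ ℂ) (σ2 : ℝ) (w : κ → τ → ℂ) (q : τ → ℝ) (k : κ) :
    Matrix ν ν ℂ :=
  (∑ j ∈ Finset.univ.erase k, vecMulVec (H k *ᵥ w j) (star (H k *ᵥ w j))) +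
    (σ2 : ℂ) • (1 : Matrix ν ν ℂ) + H k * diagonal (fun t => (q t : ℂ)) * (H k)ᴴ

open scoped MatrixOrder in
theorem noiseCovariance_mono [Finite ν] (H : κ → Matrix ν τ ℂ) (σ2 : ℝ) (w : κ → τ → ℂ) (k : κ) :
    Monotone fun q => noiseCovariance H σ2 w q k :=
  (mul_diagonal_mul_conjTranspose_mono (H k)).const_add _

theorem posDef_noiseCovariance [Finite ν] (H : κ → Matrix ν τ ℂ) {σ2 : ℝ} (hσ : 0 < σ2)
    (w : κ → τ → ℂ) {q : τ → ℝ} (hq : 0 ≤ q) (k : κ) : (noiseCovariance H σ2 w q k).PosDef := by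
  have hinterference :
      (∑ j ∈ Finset.univ.erase k, vecMulVec (H k *ᵥ w j) (star (H k *ᵥ w j))).PosSemidef :=
    posSemidef_sum _ fun j _ => posSemidef_vecMulVec_self_star _
  have hreceiver : ((σ2 : ℂ) • (1 : Matrix ν ν ℂ)).PosDef :=
    PosDef.one.smul (Complex.zero_lt_real.2 hσ)
  have hquantization : (H k * diagonal (fun t => (q t : ℂ)) * (H k)ᴴ).PosSemidef :=
    (PosSemidef.diagonal fun t => Complex.zero_le_real.2 (hq t)).mul_mul_conjTranspose_same _
  exact (hreceiver.posSemidef_add hinterference).add_posSemidef hquantization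

variable [Fintype ν]

/-- Signal-to-interference-plus-noise ratio of user `k`. The quadratic form is real when
`noiseCovariance` is Hermitian; taking the real part only makes the value a real number. -/
noncomputable def sinr (H : κ → Matrix ν τ ℂ) (σ2 : ℝ) (w : κ → τ → ℂ) (q : τ → ℝ) (k : κ) : ℝ :=
  (star (w k) ⬝ᵥ ((H k)ᴴ * (noiseCovariance H σ2 w q k)⁻¹ * H k) *ᵥ w k).re

/-- Weighted sum, with weights `α`, of the user rates (in nats) at SNR gap `Γm`. -/
noncomputable def weightedSumRate (H : κ → Matrix ν τ ℂ) (α : κ → ℝ) (σ2 Γm : ℝ)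
    (w : κ → τ → ℂ) (q : τ → ℝ) : ℝ :=
  ∑ k, α k * Real.log (1 + sinr H σ2 w q k / Γm)

variable {σ2 : ℝ}

theorem sinr_nonneg (H : κ → Matrix ν τ ℂ) (hσ : 0 < σ2) (w : κ → τ → ℂ) {q : τ → ℝ}
    (hq : 0 ≤ q) (k : κ) : 0 ≤ sinr H σ2 w q k := by
  simpa [sinr] using re_dotProduct_conjTranspose_mul_mul_mulVec_mono (H k) (w k)
    (posDef_noiseCovariance H hσ w hq k).inv.posSemidef.nonneg

theorem sinr_antitoneOn (H : κ → Matrix ν τ ℂ) (hσ : 0 < σ2) (w : κ → τ → ℂ) (k : κ) :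
    AntitoneOn (fun q => sinr H σ2 w q k) (Set.Ici 0) := fun _ hp _ _ hpq =>
  re_dotProduct_conjTranspose_mul_mul_mulVec_mono (H k) (w k) <|
    posDef_inv_le_inv (posDef_noiseCovariance H hσ w hp k) (noiseCovariance_mono H σ2 w k hpq)

theorem weightedSumRate_antitoneOn (H : κ → Matrix ν τ ℂ) {α : κ → ℝ} (hα : 0 ≤ α) (hσ : 0 < σ2)
    {Γm : ℝ} (hΓm : 0 < Γm) (w : κ → τ → ℂ) :
    AntitoneOn (weightedSumRate H α σ2 Γm w) (Set.Ici 0) := by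
  intro p hp q hq hpq
  refine Finset.sum_le_sum fun k _ => mul_le_mul_of_nonneg_left ?_ (hα k)
  have hsinr : sinr H σ2 w q k ≤ sinr H σ2 w p k := sinr_antitoneOn H hσ w k hp hq hpq
  have hpos : 0 < 1 + sinr H σ2 w q k / Γm :=
    add_pos_of_pos_of_nonneg one_pos (div_nonneg (sinr_nonneg H hσ w hq k) hΓm.le)
  exact Real.log_le_log hpos (by gcongr)

end SumRate

theorem sSup_eq_sSup_at_floor {W Q R : Type*} [AddCommGroup Q] [PartialOrder Q]
    [IsOrderedAddMonoid Q] [ConditionallyCompleteLinearOrder R] (cost : W → Q) (f : W → Q → R)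
    (P : Q) {b : Q} (hb : 0 ≤ b) (hf : ∀ w, AntitoneOn (f w) (Set.Ici b)) :
    sSup {r | ∃ w q, 0 ≤ q ∧ cost w + q ≤ P ∧ b ≤ q ∧ r = f w q} =
      sSup {r | ∃ w, cost w ≤ P - b ∧ r = f w b} := by
  apply csSup_eq_csSup_of_forall_exists_le
  · rintro _ ⟨w, q, -, hcost, hbq, rfl⟩
    have hcost_floor : cost w ≤ P - b := le_sub_iff_add_le.2 ((add_le_add_right hbq _).trans hcost)
    exact ⟨f w b, ⟨w, hcost_floor, rfl⟩, hf w Set.self_mem_Ici hbq hbq⟩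
  · rintro _ ⟨w, hcost, rfl⟩
    exact ⟨f w b, ⟨w, b, hb, le_sub_iff_add_le.1 hcost, le_rfl, rfl⟩, le_rfl⟩

theorem fixed_quantization_reduction_general {κ τ ν : Type*} [Fintype κ] [DecidableEq κ]
    [Fintype τ] [DecidableEq τ] [Fintype ν] [DecidableEq ν] (H : κ → Matrix ν τ ℂ) {α : κ → ℝ}
    (hα : 0 ≤ α) {σ2 Γm : ℝ} (hσ : 0 < σ2) (hΓm : 0 < Γm) (P : τ → ℝ) {b : τ → ℝ} (hb : 0 ≤ b) :
    sSup {r : ℝ | ∃ (w : κ → τ → ℂ) (q : τ → ℝ),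
        (∀ t, 0 ≤ q t) ∧
        (∀ t, (∑ k, ‖w k t‖ ^ 2) + q t ≤ P t) ∧
        (∀ t, b t ≤ q t) ∧
        r = weightedSumRate H α σ2 Γm w q} =
      sSup {r : ℝ | ∃ w : κ → τ → ℂ,
        (∀ t, (∑ k, ‖w k t‖ ^ 2) ≤ P t - b t) ∧
        r = weightedSumRate H α σ2 Γm w b} :=
  sSup_eq_sSup_at_floor (fun w t => ∑ k, ‖w k t‖ ^ 2) (weightedSumRate H α σ2 Γm) P hb fun w =>
    (weightedSumRate_antitoneOn H hα hσ hΓm w).mono (Set.Ici_subset_Ici.2 hb)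

/-- Reduction of the weighted sum rate maximization for the compression strategy with
fixed quantization codebooks: since the objective is nonincreasing in each quantization
noise level `q t` and the quantization constraint `q t ≥ Γq P t / (2^(C t) - 1)` is
active at an optimum, the supremum over `(w, q)` equals the supremum over beamformers
`w` alone under the modified per-antenna power constraints, with `q` fixed at `q*`. -/
theorem fixed_quantization_reduction {K T N : ℕ}
    (H : Fin K → Matrix (Fin N) (Fin T) ℂ)
    (α : Fin K → ℝ) (hα : ∀ k, 0 ≤ α k)
    (σ2 Γm Γq : ℝ) (hσ : 0 < σ2) (hΓm : 0 < Γm) (hΓq : 0 < Γq)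
    (P : Fin T → ℝ) (hP : ∀ t, 0 ≤ P t)
    (C : Fin T → ℝ) (hC : ∀ t, 1 + Γq ≤ (2 : ℝ) ^ (C t)) :
    let SINR : (Fin K → Fin T → ℂ) → (Fin T → ℝ) → Fin K → ℝ := fun w q k =>
      (star (w k) ⬝ᵥ ((H k)ᴴ *
        ((∑ j ∈ Finset.univ.erase k,
            Matrix.vecMulVec (H k *ᵥ w j) (star (H k *ᵥ w j))) +
          (σ2 : ℂ) • (1 : Matrix (Fin N) (Fin N) ℂ) +
          H k * Matrix.diagonal (fun t => (q t : ℂ)) * (H k)ᴴ)⁻¹ * H k) *ᵥ w k).re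
    let R : (Fin K → Fin T → ℂ) → (Fin T → ℝ) → Fin K → ℝ := fun w q k =>
      Real.log (1 + SINR w q k / Γm)
    let qstar : Fin T → ℝ := fun t => Γq * P t / ((2 : ℝ) ^ (C t) - 1)
    sSup {r : ℝ | ∃ (w : Fin K → Fin T → ℂ) (q : Fin T → ℝ),
        (∀ t, 0 ≤ q t) ∧
        (∀ t, (∑ k, ‖w k t‖ ^ 2) + q t ≤ P t) ∧
        (∀ t, qstar t ≤ q t) ∧
        r = ∑ k, α k * R w q k} =
      sSup {r : ℝ | ∃ w : Fin K → Fin T → ℂ,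
        (∀ t, (∑ k, ‖w k t‖ ^ 2) ≤ P t * (1 - Γq / ((2 : ℝ) ^ (C t) - 1))) ∧
        r = ∑ k, α k * R w qstar k} := by
  intro SINR R qstar
  have hqstar : 0 ≤ qstar := fun t =>
    div_nonneg (mul_nonneg hΓq.le (hP t)) (by linarith [hC t])
  have hbudget (t : Fin T) : P t * (1 - Γq / ((2 : ℝ) ^ (C t) - 1)) = P t - qstar t := by
    simp only [qstar]; ring
  simp only [hbudget]
  exact fixed_quantization_reduction_general H hα hσ hΓm P hqstar
end

section
/- In the hybrid data-sharing and compression problem (L single-antenna BSs, K single-antenna users, channels h_k ∈ ℂ^L, weights α_k ≥ 0, noise variance σ² > 0, SNR gap Γ_m > 0, quantizer gap Γ_q > 0, powers P_l, backhauls C_l, fixed rates R̂_k ≥ 0, variables w^c_k, w^d_k ∈ ℂ^L and q ∈ ℝ^L with q_l > 0, feasibility meaning Σ_k |w^c_k(l) + w^d_k(l)|² + q_l ≤ P_l and Σ_k 1{w^d_k(l) ≠ 0}·R̂_k + log(1 + Γ_q Σ_k |w^c_k(l)|²/q_l) ≤ C_l for all l, and objective Σ_k α_k log(1 + SINR_k/Γ_m)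 with SINR_k = |h_kᴴ w_k|²/(Σ_{j≠k} |h_kᴴ w_j|² + σ² + Σ_l q_l |h_k(l)|²) computed from w_k = w^c_k + w^d_k): suppose (w^c, w^d, q) is feasible and for some BS l₀ and user k₀ both w^c_{k₀}(l₀) ≠ 0 and w^d_{k₀}(l₀) ≠ 0. Then the point obtained by replacing w^d_{k₀}(l₀) with w^d_{k₀}(l₀) + w^c_{k₀}(l₀) and w^c_{k₀}(l₀) with 0 (all other variables unchanged) is feasible, has exactly the same objective value, and the left-hand side of the backhaul constraint at BS l₀ is strictly smaller than before. -/
open Matrix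

/-!
Moving the compression coefficient of user `k₀` at station `l₀` into its data-sharing coefficient
fixes `wc + wd`, through which alone the powers and the SINRs depend on the beamformers. At `l₀` the
data-sharing indicator of `k₀` was already `1`, so the data-sharing load cannot grow (it may drop if
the two coefficients cancel), while the compressed power, and with it the logarithmic compression
load, strictly decreases. No other backhaul is affected.
-/

section Load

variable {ι E : Type*} [Fintype ι] {k₀ : ι}

/-- The data-sharing part of the backhaul consumption of one base station: the sum of the rates of
the users `k` whose data-sharing coefficient `d k` at this station is nonzero. -/
def dataSharingLoad [Zero E] [DecidableEq E] (Rhat : ι → ℝ) (d : ι → E) : ℝ :=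
  ∑ k, if d k ≠ 0 then Rhat k else 0

/-- The compression part of the backhaul consumption of one base station, for compression
coefficients `c`, quantization noise power `ν` and quantizer gap `Γ`. -/
noncomputable def compressionLoad [Norm E] (Γ ν : ℝ) (c : ι → E) : ℝ :=
  Real.log (1 + Γ * (∑ k, ‖c k‖ ^ 2) / ν)

theorem dataSharingLoad_le_of_forall_ne [Zero E] [DecidableEq E] {Rhat : ι → ℝ} {d d' : ι → E}
    (hR : 0 ≤ Rhat k₀) (hd : d k₀ ≠ 0) (heq : ∀ k ≠ k₀, d' k = d k) :
    dataSharingLoad Rhat d' ≤ dataSharingLoad Rhat d := by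
  refine Finset.sum_le_sum fun k _ => ?_
  obtain rfl | hk := eq_or_ne k k₀
  · rw [if_pos hd]
    exact (ite_le_sup _ _ _).trans (max_le le_rfl hR)
  · rw [heq k hk]

theorem sum_norm_sq_lt_of_forall_ne [SeminormedAddGroup E] {c c' : ι → E}
    (hlt : ‖c' k₀‖ < ‖c k₀‖) (heq : ∀ k ≠ k₀, c' k = c k) :
    ∑ k, ‖c' k‖ ^ 2 < ∑ k, ‖c k‖ ^ 2 := by
  have hlt_sq : ‖c' k₀‖ ^ 2 < ‖c k₀‖ ^ 2 := pow_lt_pow_left₀ hlt (norm_nonneg _) two_ne_zero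
  refine Finset.sum_lt_sum (fun k _ => ?_) ⟨k₀, Finset.mem_univ k₀, hlt_sq⟩
  obtain rfl | hk := eq_or_ne k k₀
  · exact hlt_sq.le
  · rw [heq k hk]

theorem compressionLoad_lt_compressionLoad [Norm E] {Γ ν : ℝ} (hΓ : 0 < Γ) (hν : 0 < ν)
    {c c' : ι → E} (hlt : ∑ k, ‖c' k‖ ^ 2 < ∑ k, ‖c k‖ ^ 2) :
    compressionLoad Γ ν c' < compressionLoad Γ ν c := by
  have hpos : 0 < 1 + Γ * (∑ k, ‖c' k‖ ^ 2) / ν := by positivity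
  exact Real.log_lt_log hpos (by gcongr)

end Load

section Transfer

variable {ι κ M : Type*} [DecidableEq ι] [DecidableEq κ] {k₀ k : ι} {l₀ l : κ}

/-- The compression coefficients left after the coefficient of user `k₀` at station `l₀` has been
transferred to data sharing. -/
def transferCompression [Zero M] (wc : ι → κ → M) (k₀ : ι) (l₀ : κ) : ι → κ → M :=
  fun k l => if k = k₀ ∧ l = l₀ then 0 else wc k l

/-- The data-sharing coefficients after they have absorbed the compression coefficient of user `k₀`
at station `l₀`. -/
def transferDataSharing [Add M] (wc wd : ι → κ → M) (k₀ : ι) (l₀ : κ) : ι → κ → M :=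
  fun k l => if k = k₀ ∧ l = l₀ then wd k l + wc k l else wd k l

theorem transferCompression_self [Zero M] (wc : ι → κ → M) :
    transferCompression wc k₀ l₀ k₀ l₀ = 0 :=
  if_pos ⟨rfl, rfl⟩

theorem transferCompression_of_ne [Zero M] (wc : ι → κ → M) (hne : k ≠ k₀ ∨ l ≠ l₀) :
    transferCompression wc k₀ l₀ k l = wc k l :=
  if_neg (not_and_or.mpr hne)

theorem transferDataSharing_of_ne [Add M] (wc wd : ι → κ → M) (hne : k ≠ k₀ ∨ l ≠ l₀) :
    transferDataSharing wc wd k₀ l₀ k l = wd k l :=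
  if_neg (not_and_or.mpr hne)

theorem transferCompression_add_transferDataSharing [AddCommMonoid M] (wc wd : ι → κ → M)
    (k : ι) (l : κ) :
    transferCompression wc k₀ l₀ k l + transferDataSharing wc wd k₀ l₀ k l =
      wc k l + wd k l := by
  simp only [transferCompression, transferDataSharing]
  split_ifs
  · rw [zero_add, add_comm]
  · rfl

end Transfer

section Feasibility

variable {ι κ E : Type*} [Fintype ι] [NormedAddCommGroup E] [DecidableEq E]

/-- The backhaul consumption of station `l` at the point `(wc, wd, q)`. -/
noncomputable def backhaulLoad (Γq : ℝ) (Rhat : ι → ℝ) (wc wd : ι → κ → E) (q : κ → ℝ) (l : κ) :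
    ℝ :=
  dataSharingLoad Rhat (fun k => wd k l) + compressionLoad Γq (q l) (fun k => wc k l)

/-- Feasibility in the hybrid data-sharing and compression problem: positive quantization noise
powers, and the power and backhaul constraints at every station. Coefficients may lie in any normed
group, since the constraints involve only sums and norms. -/
def HybridFeasible (Γq : ℝ) (P C : κ → ℝ) (Rhat : ι → ℝ) (wc wd : ι → κ → E) (q : κ → ℝ) :
    Prop :=
  (∀ l, 0 < q l) ∧
  (∀ l, (∑ k, ‖wc k l + wd k l‖ ^ 2) + q l ≤ P l) ∧
  (∀ l, backhaulLoad Γq Rhat wc wd q l ≤ C l)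

variable [DecidableEq ι] [DecidableEq κ] {Γq : ℝ} {Rhat : ι → ℝ} {wc wd : ι → κ → E} {q : κ → ℝ}
  {k₀ : ι} {l₀ : κ}

theorem backhaulLoad_transfer_lt (hΓq : 0 < Γq) (hR : 0 ≤ Rhat k₀) (hq : 0 < q l₀)
    (hc : wc k₀ l₀ ≠ 0) (hd : wd k₀ l₀ ≠ 0) :
    backhaulLoad Γq Rhat (transferCompression wc k₀ l₀) (transferDataSharing wc wd k₀ l₀) q l₀ <
      backhaulLoad Γq Rhat wc wd q l₀ := by
  have hnorm : ‖transferCompression wc k₀ l₀ k₀ l₀‖ < ‖wc k₀ l₀‖ := by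
    rwa [transferCompression_self, norm_zero, norm_pos_iff]
  refine add_lt_add_of_le_of_lt (dataSharingLoad_le_of_forall_ne hR hd fun k hk => ?_)
    (compressionLoad_lt_compressionLoad hΓq hq
      (sum_norm_sq_lt_of_forall_ne hnorm fun k hk => ?_))
  · exact transferDataSharing_of_ne wc wd (.inl hk)
  · exact transferCompression_of_ne wc (.inl hk)

theorem backhaulLoad_transfer_of_ne {l : κ} (hl : l ≠ l₀) :
    backhaulLoad Γq Rhat (transferCompression wc k₀ l₀) (transferDataSharing wc wd k₀ l₀) q l =
      backhaulLoad Γq Rhat wc wd q l := by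
  simp only [backhaulLoad, transferCompression_of_ne wc (.inr hl),
    transferDataSharing_of_ne wc wd (.inr hl)]

theorem HybridFeasible.transfer {P C : κ → ℝ} (hf : HybridFeasible Γq P C Rhat wc wd q)
    (hload : backhaulLoad Γq Rhat (transferCompression wc k₀ l₀)
      (transferDataSharing wc wd k₀ l₀) q l₀ ≤ backhaulLoad Γq Rhat wc wd q l₀) :
    HybridFeasible Γq P C Rhat (transferCompression wc k₀ l₀)
      (transferDataSharing wc wd k₀ l₀) q := by
  obtain ⟨hq, hpower, hbackhaul⟩ := hf
  refine ⟨hq, fun l => ?_, fun l => ?_⟩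
  · simpa only [transferCompression_add_transferDataSharing] using hpower l
  · obtain rfl | hl := eq_or_ne l l₀
    · exact hload.trans (hbackhaul l)
    · exact (backhaulLoad_transfer_of_ne hl).trans_le (hbackhaul l)

-- Equality of the combined beamformers preserves every objective that depends only on them and `q`.
theorem hybrid_transfer_step_general {P C : κ → ℝ} (hΓq : 0 < Γq) (hR : 0 ≤ Rhat k₀)
    (hf : HybridFeasible Γq P C Rhat wc wd q) (hc : wc k₀ l₀ ≠ 0) (hd : wd k₀ l₀ ≠ 0) :
    HybridFeasible Γq P C Rhat (transferCompression wc k₀ l₀)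
        (transferDataSharing wc wd k₀ l₀) q ∧
      transferCompression wc k₀ l₀ + transferDataSharing wc wd k₀ l₀ = wc + wd ∧
      backhaulLoad Γq Rhat (transferCompression wc k₀ l₀) (transferDataSharing wc wd k₀ l₀) q l₀ <
        backhaulLoad Γq Rhat wc wd q l₀ :=
  have hlt := backhaulLoad_transfer_lt hΓq hR (hf.1 l₀) hc hd
  ⟨hf.transfer hlt.le, funext₂ (transferCompression_add_transferDataSharing wc wd), hlt⟩

end Feasibility

/-- Key step in the proof of Proposition 1: if at a feasible point of the hybrid
problem some user `k₀` has both a nonzero compression coefficient and a nonzero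
data-sharing coefficient at some BS `l₀`, then moving the compression coefficient
into the data-sharing coefficient (zeroing the former) yields a feasible point with
exactly the same objective value and a strictly smaller left-hand side of the
backhaul constraint at BS `l₀`. -/
theorem hybrid_transfer_step {L K : ℕ}
    (h : Fin K → Fin L → ℂ)
    (α : Fin K → ℝ) (hα : ∀ k, 0 ≤ α k)
    (σ2 Γm Γq : ℝ) (hσ : 0 < σ2) (hΓm : 0 < Γm) (hΓq : 0 < Γq)
    (P : Fin L → ℝ) (C : Fin L → ℝ)
    (Rhat : Fin K → ℝ) (hR : ∀ k, 0 ≤ Rhat k) :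
    let feasible : (Fin K → Fin L → ℂ) → (Fin K → Fin L → ℂ) → (Fin L → ℝ) → Prop :=
      fun wc wd q =>
        (∀ l, 0 < q l) ∧
        (∀ l, (∑ k, ‖wc k l + wd k l‖ ^ 2) + q l ≤ P l) ∧
        (∀ l, (∑ k, if wd k l ≠ 0 then Rhat k else 0) +
          Real.log (1 + Γq * (∑ k, ‖wc k l‖ ^ 2) / q l) ≤ C l)
    let obj : (Fin K → Fin L → ℂ) → (Fin K → Fin L → ℂ) → (Fin L → ℝ) → ℝ :=
      fun wc wd q => ∑ k, α k * Real.log (1 +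
        (‖star (h k) ⬝ᵥ (fun l => wc k l + wd k l)‖ ^ 2 /
          ((∑ j ∈ Finset.univ.erase k,
              ‖star (h k) ⬝ᵥ (fun l => wc j l + wd j l)‖ ^ 2) +
            σ2 + ∑ l, q l * ‖h k l‖ ^ 2)) / Γm)
    ∀ (wc wd : Fin K → Fin L → ℂ) (q : Fin L → ℝ),
      feasible wc wd q →
      ∀ (k₀ : Fin K) (l₀ : Fin L), wc k₀ l₀ ≠ 0 → wd k₀ l₀ ≠ 0 →
      let wc' : Fin K → Fin L → ℂ := fun k l => if k = k₀ ∧ l = l₀ then 0 else wc k l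
      let wd' : Fin K → Fin L → ℂ := fun k l =>
        if k = k₀ ∧ l = l₀ then wd k l + wc k l else wd k l
      feasible wc' wd' q ∧
        obj wc' wd' q = obj wc wd q ∧
        (∑ k, if wd' k l₀ ≠ 0 then Rhat k else 0) +
            Real.log (1 + Γq * (∑ k, ‖wc' k l₀‖ ^ 2) / q l₀) <
          (∑ k, if wd k l₀ ≠ 0 then Rhat k else 0) +
            Real.log (1 + Γq * (∑ k, ‖wc k l₀‖ ^ 2) / q l₀) := by
  intro feasible obj wc wd q hf k₀ l₀ hc hd wc' wd'
  obtain ⟨hfeasible, hsum, hlt⟩ := hybrid_transfer_step_general hΓq (hR k₀) hf hc hd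
  have hcoeff : ∀ k l, wc' k l + wd' k l = wc k l + wd k l := fun k l => congrFun₂ hsum k l
  exact ⟨hfeasible, by simp only [obj, hcoeff], hlt⟩
end
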